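/- Let R be a commutative ring, I an ideal of R, and n ≥ 4. There exists a group anti-automorphism τ of St*(n,R,I) (i.e., a bijection with τ(gh) = τ(h)τ(g) for all g,h) such that τ(F(u,v)) = S(v,u) and τ(S(u,v)) = F(v,u) for all generators; moreover τ∘τ = id. -/

import Mathlib

/-- The set of elementary transvections inside `GL n R`. -/
def transvectionSet (n : ℕ) (R : Type) [CommRing R] :
    Set (Matrix.GeneralLinearGroup (Fin n) R) :=
  {M | ∃ (i j : Fin n) (_ : i ≠ j) (r : R),
    (M : Matrix (Fin n) (Fin n) R) = 1 + Matrix.single i j r}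

/-- The elementary subgroup `E(n, R) ≤ GL(n, R)`. -/
def Elem (n : ℕ) (R : Type) [CommRing R] : Subgroup (Matrix.GeneralLinearGroup (Fin n) R) :=
  Subgroup.closure (transvectionSet n R)

/-- The set `E(n,R)e₁` of first columns of elementary matrices. -/
def Ecol (n : ℕ) (R : Type) [CommRing R] [NeZero n] : Set (Fin n → R) :=
  {u | ∃ M ∈ Elem n R, u = fun i => (M : Matrix (Fin n) (Fin n) R) i 0}

/-- The matrix `t(u, v) = 1 + u·vᵗ`. -/
def tMat {n : ℕ} {R : Type} [CommRing R] (u v : Fin n → R) : Matrix (Fin n) (Fin n) R :=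
  1 + Matrix.vecMulVec u v

/-- The `k`-th column of an invertible matrix. -/
def colM {n : ℕ} {R : Type} [CommRing R] (M : Matrix.GeneralLinearGroup (Fin n) R)
    (k : Fin n) : Fin n → R :=
  fun i => (M : Matrix (Fin n) (Fin n) R) i k

/-- The `k`-th column of the contragredient matrix `M* = (Mᵗ)⁻¹ = (M⁻¹)ᵗ`. -/
def starCol {n : ℕ} {R : Type} [CommRing R] (M : Matrix.GeneralLinearGroup (Fin n) R)
    (k : Fin n) : Fin n → R :=
  fun i => ((M⁻¹ : Matrix.GeneralLinearGroup (Fin n) R) : Matrix (Fin n) (Fin n) R) k i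

/-- Unimodularity of the `n × 2` matrix with columns `u`, `w`: it admits a left inverse. -/
def Unimodular2 {n : ℕ} {R : Type} [CommRing R] (u w : Fin n → R) : Prop :=
  ∃ x y : Fin n → R,
    dotProduct x u = 1 ∧ dotProduct x w = 0 ∧
    dotProduct y u = 0 ∧ dotProduct y w = 1
/-- Generators `F(u,v)` and `S(u,v)` of the group `St*(n, R, I)`. -/
inductive StarGen (n : ℕ) (R : Type) [CommRing R] [NeZero n] (I : Ideal R) : Type
  | F (u v : Fin n → R) (hu : u ∈ Ecol n R) (hv : ∀ i, v i ∈ I)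
      (ho : dotProduct u v = 0) : StarGen n R I
  | S (u v : Fin n → R) (hu : ∀ i, u i ∈ I) (hv : v ∈ Ecol n R)
      (ho : dotProduct u v = 0) : StarGen n R I

/-- The relations (R1)–(R4) of the group `St*(n, R, I)`. -/
inductive StarRels (n : ℕ) (R : Type) [CommRing R] [NeZero n] (I : Ideal R) :
    FreeGroup (StarGen n R I) → Prop
  | addF (u v w : Fin n → R) (hu : u ∈ Ecol n R) (hv : ∀ i, v i ∈ I) (hw : ∀ i, w i ∈ I)
      (hvw : ∀ i, (v + w) i ∈ I) (o1 : dotProduct u v = 0)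
      (o2 : dotProduct u w = 0) (o3 : dotProduct u (v + w) = 0) :
      StarRels n R I ((FreeGroup.of (StarGen.F u v hu hv o1) : FreeGroup (StarGen n R I)) *
        FreeGroup.of (StarGen.F u w hu hw o2) * (FreeGroup.of (StarGen.F u (v + w) hu hvw o3))⁻¹)
  | addS (u w v : Fin n → R) (hu : ∀ i, u i ∈ I) (hw : ∀ i, w i ∈ I)
      (huw : ∀ i, (u + w) i ∈ I) (hv : v ∈ Ecol n R) (o1 : dotProduct u v = 0)
      (o2 : dotProduct w v = 0) (o3 : dotProduct (u + w) v = 0) :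
      StarRels n R I ((FreeGroup.of (StarGen.S u v hu hv o1) : FreeGroup (StarGen n R I)) *
        FreeGroup.of (StarGen.S w v hw hv o2) * (FreeGroup.of (StarGen.S (u + w) v huw hv o3))⁻¹)
  | conjF (u v u' v' : Fin n → R) (hu : u ∈ Ecol n R) (hv : ∀ i, v i ∈ I)
      (o1 : dotProduct u v = 0) (hu' : u' ∈ Ecol n R) (hv' : ∀ i, v' i ∈ I)
      (o2 : dotProduct u' v' = 0)
      (hu'' : Matrix.mulVec (tMat u v) u' ∈ Ecol n R)
      (hv'' : ∀ i, Matrix.mulVec (1 - Matrix.vecMulVec v u) v' i ∈ I)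
      (o3 : dotProduct (Matrix.mulVec (tMat u v) u')
        (Matrix.mulVec (1 - Matrix.vecMulVec v u) v') = 0) :
      StarRels n R I ((FreeGroup.of (StarGen.F u v hu hv o1) : FreeGroup (StarGen n R I)) *
        FreeGroup.of (StarGen.F u' v' hu' hv' o2) * (FreeGroup.of (StarGen.F u v hu hv o1))⁻¹ *
        (FreeGroup.of (StarGen.F (Matrix.mulVec (tMat u v) u')
          (Matrix.mulVec (1 - Matrix.vecMulVec v u) v') hu'' hv'' o3))⁻¹)
  | coinc (M : Matrix.GeneralLinearGroup (Fin n) R) (hM : M ∈ Elem n R) (a : R) (ha : a ∈ I)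
      (h1 : colM M 0 ∈ Ecol n R) (h2 : ∀ i, (a • starCol M 1) i ∈ I)
      (h3 : dotProduct (colM M 0) (a • starCol M 1) = 0)
      (h4 : ∀ i, (a • colM M 0) i ∈ I) (h5 : starCol M 1 ∈ Ecol n R)
      (h6 : dotProduct (a • colM M 0) (starCol M 1) = 0) :
      StarRels n R I ((FreeGroup.of (StarGen.F (colM M 0) (a • starCol M 1) h1 h2 h3) :
          FreeGroup (StarGen n R I)) *
        (FreeGroup.of (StarGen.S (a • colM M 0) (starCol M 1) h4 h5 h6))⁻¹)

/-- The group `St*(n, R, I)`. -/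
abbrev StStar (n : ℕ) (R : Type) [CommRing R] [NeZero n] (I : Ideal R) : Type :=
  PresentedGroup {w | StarRels n R I w}

namespace StAux
open Matrix

section
set_option linter.all false
variable {n : ℕ} {R : Type} [CommRing R]

lemma colM_eq (M : GeneralLinearGroup (Fin n) R) (k : Fin n) :
    colM M k = M.val *ᵥ Pi.single k 1 := by
  ext i; simp [colM]

lemma starCol_eq (M : GeneralLinearGroup (Fin n) R) (k : Fin n) :
    starCol M k = Pi.single k 1 ᵥ* M⁻¹.val := by
  ext i; simp [starCol]

lemma colM_mul (g M : GeneralLinearGroup (Fin n) R) (k : Fin n) :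
    colM (g * M) k = g.val *ᵥ colM M k := by
  simp only [colM_eq, Units.val_mul, mulVec_mulVec]

lemma starCol_mul (g M : GeneralLinearGroup (Fin n) R) (k : Fin n) :
    starCol (g * M) k = starCol M k ᵥ* g⁻¹.val := by
  simp only [starCol_eq, _root_.mul_inv_rev, Units.val_mul, vecMul_vecMul]

lemma dot_act (g : GeneralLinearGroup (Fin n) R) (u v : Fin n → R) :
    (g.val *ᵥ u) ⬝ᵥ (v ᵥ* g⁻¹.val) = u ⬝ᵥ v := by
  rw [dotProduct_comm, ← dotProduct_mulVec, mulVec_mulVec, ← Units.val_mul]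
  simp [dotProduct_comm]

lemma dot_col (M : GeneralLinearGroup (Fin n) R) (i j : Fin n) :
    colM M i ⬝ᵥ starCol M j = if i = j then 1 else 0 := by
  rw [colM_eq, starCol_eq, dot_act]
  by_cases h : i = j
  · subst h; simp
  · simp [h]

/-- The contragredient homomorphism. -/
def contra : GeneralLinearGroup (Fin n) R →* GeneralLinearGroup (Fin n) R where
  toFun M := ⟨M⁻¹.valᵀ, M.valᵀ,
    by rw [← transpose_mul, ← Units.val_mul]; simp,
    by rw [← transpose_mul, ← Units.val_mul]; simp⟩
  map_one' := by apply Units.ext; simp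
  map_mul' a b := by
    apply Units.ext
    simp only [_root_.mul_inv_rev, Units.val_mul, transpose_mul]

lemma contra_val (M : GeneralLinearGroup (Fin n) R) : (contra M).val = M⁻¹.valᵀ := rfl
lemma contra_inv_val (M : GeneralLinearGroup (Fin n) R) : (contra M)⁻¹.val = M.valᵀ := rfl

lemma colM_contra (M : GeneralLinearGroup (Fin n) R) (k : Fin n) :
    colM (contra M) k = starCol M k := rfl

lemma starCol_contra (M : GeneralLinearGroup (Fin n) R) (k : Fin n) :
    starCol (contra M) k = colM M k := rfl

/-- The transvection `1 + u vᵗ` as an invertible matrix. -/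
def tGL (u v : Fin n → R) (h : u ⬝ᵥ v = 0) : GeneralLinearGroup (Fin n) R where
  val := 1 + vecMulVec u v
  inv := 1 - vecMulVec u v
  val_inv := by
    have : vecMulVec u v * vecMulVec u v = 0 := by
      rw [vecMulVec_mul_vecMulVec, dotProduct_comm, h]; simp
    rw [add_mul, mul_sub, mul_sub, this]; simp
  inv_val := by
    have : vecMulVec u v * vecMulVec u v = 0 := by
      rw [vecMulVec_mul_vecMulVec, dotProduct_comm, h]; simp
    rw [sub_mul, mul_add, mul_add, this]; simp

lemma tGL_val (u v : Fin n → R) (h : u ⬝ᵥ v = 0) : (tGL u v h).val = 1 + vecMulVec u v := rfl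
lemma tGL_inv_val (u v : Fin n → R) (h : u ⬝ᵥ v = 0) :
    (tGL u v h)⁻¹.val = 1 - vecMulVec u v := rfl

lemma tGL_mulVec (u v : Fin n → R) (h : u ⬝ᵥ v = 0) (x : Fin n → R) :
    (tGL u v h).val *ᵥ x = x + (v ⬝ᵥ x) • u := by
  rw [tGL_val, add_mulVec, one_mulVec, vecMulVec_mulVec]; simp

lemma vecMul_tGL (u v : Fin n → R) (h : u ⬝ᵥ v = 0) (x : Fin n → R) :
    x ᵥ* (tGL u v h)⁻¹.val = x - (x ⬝ᵥ u) • v := by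
  rw [tGL_inv_val, vecMul_sub, vecMul_one, vecMul_vecMulVec]

lemma tGL_zero (v : Fin n → R) (h : (0 : Fin n → R) ⬝ᵥ v = 0) : tGL 0 v h = 1 := by
  apply Units.ext; simp [tGL_val]

lemma tGL_add (u w v : Fin n → R) (h : u ⬝ᵥ v = 0) (h' : w ⬝ᵥ v = 0) (h'' : (u + w) ⬝ᵥ v = 0) :
    tGL (u + w) v h'' = tGL u v h * tGL w v h' := by
  apply Units.ext
  have : vecMulVec u v * vecMulVec w v = 0 := by
    rw [vecMulVec_mul_vecMulVec, dotProduct_comm, h']; simp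
  simp only [tGL_val, Units.val_mul, add_mul, mul_add, this, add_vecMulVec]
  simp; abel

lemma tGL_conj (M : GeneralLinearGroup (Fin n) R) (u v : Fin n → R) (h : u ⬝ᵥ v = 0)
    (h' : (M.val *ᵥ u) ⬝ᵥ (v ᵥ* M⁻¹.val) = 0) :
    tGL (M.val *ᵥ u) (v ᵥ* M⁻¹.val) h' = M * tGL u v h * M⁻¹ := by
  apply Units.ext
  simp only [tGL_val, Units.val_mul, mul_add, add_mul, mul_one, mul_vecMulVec, vecMulVec_mul]
  rw [← Units.val_mul]; simp

lemma tGL_smul (u v : Fin n → R) (a : R) (h : (a • u) ⬝ᵥ v = 0) (h' : u ⬝ᵥ (a • v) = 0) :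
    tGL (a • u) v h = tGL u (a • v) h' := by
  apply Units.ext
  simp only [tGL_val, smul_vecMulVec, vecMulVec_smul]

lemma contra_tGL (u v : Fin n → R) (h : u ⬝ᵥ v = 0) (h' : v ⬝ᵥ u = 0) :
    (contra (tGL u v h))⁻¹ = tGL v u h' := by
  apply Units.ext
  rw [contra_inv_val, tGL_val, tGL_val, transpose_add, transpose_one, transpose_vecMulVec]

lemma tGL_basis_mem (i j : Fin n) (hij : i ≠ j) (r : R)
    (h : (Pi.single i r : Fin n → R) ⬝ᵥ Pi.single j 1 = 0) :
    tGL (Pi.single i r) (Pi.single j 1) h ∈ Elem n R := by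
  apply Subgroup.subset_closure
  refine ⟨i, j, hij, r, ?_⟩
  rw [tGL_val]
  congr 1
  ext a b
  simp only [vecMulVec_apply, single_apply, Pi.single_apply]
  by_cases h1 : a = i <;> by_cases h2 : b = j <;> simp [h1, h2, eq_comm]
  all_goals first | exact fun h => absurd h.symm h1 | exact fun h => absurd h.symm h2 | skip

lemma basis_dot (i j : Fin n) (hij : i ≠ j) (r : R) :
    (Pi.single i r : Fin n → R) ⬝ᵥ Pi.single j 1 = 0 := by
  simp [hij.symm, hij]

lemma contra_mem {M : GeneralLinearGroup (Fin n) R} (hM : M ∈ Elem n R) :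
    contra M ∈ Elem n R := by
  have : Elem n R ≤ (Elem n R).comap contra := by
    unfold Elem
    rw [Subgroup.closure_le]
    rintro M ⟨i, j, hij, r, hM⟩
    have hd := basis_dot (R := R) i j hij r
    have hd' := basis_dot (R := R) j i hij.symm r
    have e : M = tGL (Pi.single i r) (Pi.single j 1) hd := by
      apply Units.ext
      rw [hM, tGL_val]
      congr 1
      ext a b
      simp only [vecMulVec_apply, single_apply, Pi.single_apply]
      by_cases h1 : a = i <;> by_cases h2 : b = j <;> simp [h1, h2, eq_comm]
      all_goals first | exact fun h => absurd h.symm h1 | exact fun h => absurd h.symm h2 | skip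
    change contra M ∈ Elem n R
    have e2 : contra M = (tGL (Pi.single j r) (Pi.single i 1) hd')⁻¹ := by
      rw [eq_comm, inv_eq_iff_eq_inv, e, contra_tGL _ _ hd (by rw [dotProduct_comm]; exact hd)]
      apply Units.ext
      rw [tGL_val, tGL_val]
      congr 1
      ext a b
      simp only [vecMulVec_apply, Pi.single_apply]
      by_cases h1 : a = j <;> by_cases h2 : b = i <;> simp [h1, h2]
    rw [e2]
    exact inv_mem (tGL_basis_mem j i hij.symm r hd')
  exact this hM

variable [NeZero n]

lemma mem_Ecol {u : Fin n → R} : u ∈ Ecol n R ↔ ∃ M ∈ Elem n R, u = colM M 0 := Iff.rfl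

lemma mem_Ecol' {u : Fin n → R} : u ∈ Ecol n R ↔ ∃ M ∈ Elem n R, u = starCol M 0 := by
  rw [mem_Ecol]
  constructor
  · rintro ⟨M, hM, rfl⟩
    exact ⟨contra M, contra_mem hM, (starCol_contra M 0).symm⟩
  · rintro ⟨M, hM, rfl⟩
    exact ⟨contra M, contra_mem hM, (colM_contra M 0).symm⟩

lemma act_col {g : GeneralLinearGroup (Fin n) R} (hg : g ∈ Elem n R) {u : Fin n → R}
    (hu : u ∈ Ecol n R) : g.val *ᵥ u ∈ Ecol n R := by
  obtain ⟨M, hM, rfl⟩ := mem_Ecol.1 hu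
  exact mem_Ecol.2 ⟨g * M, mul_mem hg hM, (colM_mul g M 0).symm⟩

lemma act_star {g : GeneralLinearGroup (Fin n) R} (hg : g ∈ Elem n R) {u : Fin n → R}
    (hu : u ∈ Ecol n R) : u ᵥ* g⁻¹.val ∈ Ecol n R := by
  obtain ⟨M, hM, rfl⟩ := mem_Ecol'.1 hu
  exact mem_Ecol'.2 ⟨g * M, mul_mem hg hM, (starCol_mul g M 0).symm⟩

/-- `n`-tuples of elements of `I`. -/
def InI (I : Ideal R) (v : Fin n → R) : Prop := ∀ i, v i ∈ I

lemma InI.mulVec {I : Ideal R} {v : Fin n → R} (h : InI I v) (A : Matrix (Fin n) (Fin n) R) :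
    InI I (A *ᵥ v) := fun i =>
  show ∑ j, A i j * v j ∈ I from I.sum_mem fun j _ => I.mul_mem_left _ (h j)

lemma InI.vecMul {I : Ideal R} {v : Fin n → R} (h : InI I v) (A : Matrix (Fin n) (Fin n) R) :
    InI I (v ᵥ* A) := fun i =>
  show ∑ j, v j * A j i ∈ I from I.sum_mem fun j _ => I.mul_mem_right _ (h j)

lemma InI.add {I : Ideal R} {v w : Fin n → R} (h : InI I v) (h' : InI I w) :
    InI I (v + w) := fun i => I.add_mem (h i) (h' i)

lemma InI.smul {I : Ideal R} {a : R} (ha : a ∈ I) (v : Fin n → R) :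
    InI I (a • v) := fun i => I.mul_mem_right _ ha

lemma InI.zero {I : Ideal R} : InI I (0 : Fin n → R) := fun _ => I.zero_mem

lemma decomp (I : Ideal R) (M : GeneralLinearGroup (Fin n) R) (p : (Fin n → R) → Prop)
    (p0 : p 0)
    (padd : ∀ u w, InI I u → InI I w → u ⬝ᵥ starCol M 0 = 0 → w ⬝ᵥ starCol M 0 = 0 →
      p u → p w → p (u + w))
    (pb : ∀ i, i ≠ 0 → ∀ a ∈ I, p (a • colM M i))
    (u : Fin n → R) (hu : InI I u) (ho : u ⬝ᵥ starCol M 0 = 0) : p u := by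
  have e : u = ∑ i, (M⁻¹.val *ᵥ u) i • colM M i := by
    have h1 : M.val *ᵥ (M⁻¹.val *ᵥ u) = u := by
      rw [mulVec_mulVec, ← Units.val_mul]; simp
    ext k
    conv_lhs => rw [← h1]
    simp only [mulVec, dotProduct, Finset.sum_apply, Pi.smul_apply, smul_eq_mul, colM]
    exact Finset.sum_congr rfl fun _ _ => mul_comm _ _
  have h0 : (M⁻¹.val *ᵥ u) 0 = 0 := by
    rw [← ho, dotProduct_comm]; rfl
  rw [e]
  refine (Finset.sum_induction (s := Finset.univ) (fun i => (M⁻¹.val *ᵥ u) i • colM M i)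
    (fun x => InI I x ∧ x ⬝ᵥ starCol M 0 = 0 ∧ p x) ?_ ?_ ?_).2.2
  · rintro a b ⟨h1, h2, h3⟩ ⟨h4, h5, h6⟩
    exact ⟨h1.add h4, by rw [add_dotProduct, h2, h5, add_zero], padd _ _ h1 h4 h2 h5 h3 h6⟩
  · exact ⟨InI.zero, zero_dotProduct _, p0⟩
  · intro i _
    by_cases hi : i = 0
    · subst hi
      rw [h0, zero_smul]
      exact ⟨InI.zero, zero_dotProduct _, p0⟩
    · refine ⟨InI.smul (hu.mulVec _ i) _, ?_, pb i hi _ (hu.mulVec _ i)⟩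
      rw [smul_dotProduct, dot_col, if_neg hi, smul_zero]

lemma tGL_mem' {u v : Fin n → R} (hv : v ∈ Ecol n R) (h : u ⬝ᵥ v = 0) :
    tGL u v h ∈ Elem n R := by
  obtain ⟨M, hM, rfl⟩ := mem_Ecol'.1 hv
  refine decomp ⊤ M (fun u => ∀ h : u ⬝ᵥ starCol M 0 = 0, tGL u (starCol M 0) h ∈ Elem n R)
    ?_ ?_ ?_ u (fun _ => trivial) h h
  · intro h; rw [tGL_zero]; exact one_mem _
  · intro u w _ _ hu hw pu pw h
    rw [tGL_add u w _ hu hw]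
    exact mul_mem (pu hu) (pw hw)
  · intro i hi a _ h
    have hd := basis_dot (R := R) i 0 hi a
    have e : a • colM M i = M.val *ᵥ Pi.single i a := by
      ext; simp [colM, mul_comm]
    have : tGL (a • colM M i) (starCol M 0) h =
        M * tGL (Pi.single i a) (Pi.single 0 1) hd * M⁻¹ := by
      rw [← tGL_conj M _ _ hd (by rw [dot_act]; exact hd)]
      congr 1
      exact starCol_eq M 0
    rw [this]
    exact mul_mem (mul_mem hM (tGL_basis_mem i 0 hi a hd)) (inv_mem hM)

lemma tGL_mem {u v : Fin n → R} (hu : u ∈ Ecol n R) (h : u ⬝ᵥ v = 0) :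
    tGL u v h ∈ Elem n R := by
  have h' : v ⬝ᵥ u = 0 := by rw [dotProduct_comm]; exact h
  rw [← contra_tGL v u h' h]
  exact inv_mem (contra_mem (tGL_mem' hu h'))

/-- The pair `(i, j)` is reachable from `(0, 1)`. -/
def Good (R : Type) [CommRing R] (i j : Fin n) : Prop :=
  ∃ P ∈ Elem n R, colM P 0 = Pi.single i 1 ∧ starCol P 1 = Pi.single j 1

lemma good_left {i j k : Fin n} (h : Good R i j) (hij : i ≠ j) (hk : k ≠ j) : Good R k j := by
  by_cases hik : k = i
  · rwa [hik]
  obtain ⟨P, hP, h1, h2⟩ := h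
  have d1 := basis_dot (R := R) k i hik 1
  have d2 := basis_dot (R := R) i k (Ne.symm hik) (-1)
  refine ⟨tGL _ _ d2 * (tGL _ _ d1 * P), mul_mem (tGL_basis_mem _ _ (Ne.symm hik) _ _)
    (mul_mem (tGL_basis_mem _ _ hik _ _) hP), ?_, ?_⟩
  · rw [colM_mul, colM_mul, h1, tGL_mulVec, tGL_mulVec]
    ext x
    simp [Pi.single_apply, hik, Ne.symm hik]
    try (split_ifs <;> simp)
  · rw [starCol_mul, starCol_mul, h2, vecMul_tGL, vecMul_tGL]
    ext x
    simp [hij, hk, hij.symm, hk.symm]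

lemma good_right {i j k : Fin n} (h : Good R i j) (hij : i ≠ j) (hk : k ≠ i) : Good R i k := by
  by_cases hik : k = j
  · rwa [hik]
  obtain ⟨P, hP, h1, h2⟩ := h
  have d1 := basis_dot (R := R) j k (Ne.symm hik) (-1)
  have d2 := basis_dot (R := R) k j hik 1
  refine ⟨tGL _ _ d2 * (tGL _ _ d1 * P), mul_mem (tGL_basis_mem _ _ hik _ _)
    (mul_mem (tGL_basis_mem _ _ (Ne.symm hik) _ _) hP), ?_, ?_⟩
  · rw [colM_mul, colM_mul, h1, tGL_mulVec, tGL_mulVec]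
    ext x
    simp [hij, hk, hij.symm, hk.symm]
  · rw [starCol_mul, starCol_mul, h2, vecMul_tGL, vecMul_tGL]
    ext x
    simp [Pi.single_apply, hik, Ne.symm hik]

lemma zero_ne_one' (hn : 4 ≤ n) : (0 : Fin n) ≠ 1 := by
  intro h
  have := congrArg Fin.val h
  rw [Fin.val_one', Nat.mod_eq_of_lt (by omega)] at this
  simp at this

lemma good_all (hn : 4 ≤ n) {i j : Fin n} (hij : i ≠ j) : Good R i j := by
  have h01 := zero_ne_one' hn
  have g0 : Good R (0 : Fin n) 1 := by
    refine ⟨1, one_mem _, ?_, ?_⟩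
    · rw [colM_eq, Units.val_one, one_mulVec]
    · rw [starCol_eq]; simp
  obtain ⟨k, hk⟩ : ∃ k : Fin n, k ∉ ({0, 1, j} : Finset (Fin n)) := by
    by_contra hc
    push Not at hc
    have h1 : (Finset.univ : Finset (Fin n)) ⊆ {0, 1, j} := fun x _ => hc x
    have h2 := Finset.card_le_card h1
    have h3 : ({0, 1, j} : Finset (Fin n)).card ≤ 3 := Finset.card_le_three
    simp only [Finset.card_univ, Fintype.card_fin] at h2
    omega
  simp only [Finset.mem_insert, Finset.mem_singleton, not_or] at hk
  exact good_left (good_right (good_left g0 h01 hk.2.1) hk.2.1 (Ne.symm hk.2.2)) hk.2.2 hij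

section St
variable (I : Ideal R)

open Classical in
/-- Total version of the generator `F`. -/
noncomputable def Fd (u v : Fin n → R) : StStar n R I :=
  if h : u ∈ Ecol n R ∧ InI I v ∧ u ⬝ᵥ v = 0 then
    PresentedGroup.of (StarGen.F u v h.1 h.2.1 h.2.2) else 1

open Classical in
/-- Total version of the generator `S`. -/
noncomputable def Sd (u v : Fin n → R) : StStar n R I :=
  if h : InI I u ∧ v ∈ Ecol n R ∧ u ⬝ᵥ v = 0 then
    PresentedGroup.of (StarGen.S u v h.1 h.2.1 h.2.2) else 1

variable {I}

lemma Fd_eq {u v : Fin n → R} (h1 : u ∈ Ecol n R) (h2 : ∀ i, v i ∈ I) (h3 : u ⬝ᵥ v = 0) :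
    (PresentedGroup.of (StarGen.F u v h1 h2 h3) : StStar n R I) = Fd I u v := by
  rw [Fd, dif_pos ⟨h1, h2, h3⟩]

lemma Sd_eq {u v : Fin n → R} (h1 : ∀ i, u i ∈ I) (h2 : v ∈ Ecol n R) (h3 : u ⬝ᵥ v = 0) :
    (PresentedGroup.of (StarGen.S u v h1 h2 h3) : StStar n R I) = Sd I u v := by
  rw [Sd, dif_pos ⟨h1, h2, h3⟩]

lemma Sd_add {u w v : Fin n → R} (hu : InI I u) (hw : InI I w) (hv : v ∈ Ecol n R)
    (o1 : u ⬝ᵥ v = 0) (o2 : w ⬝ᵥ v = 0) : Sd I u v * Sd I w v = Sd I (u + w) v := by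
  have o3 : (u + w) ⬝ᵥ v = 0 := by rw [add_dotProduct, o1, o2, add_zero]
  have := PresentedGroup.one_of_mem (rels := {w | StarRels n R I w})
    (StarRels.addS u w v hu hw (hu.add hw) hv o1 o2 o3)
  rw [← Sd_eq hu hv o1, ← Sd_eq hw hv o2, ← Sd_eq (hu.add hw) hv o3]
  exact mul_inv_eq_one.1 this

lemma Fd_add {u v w : Fin n → R} (hu : u ∈ Ecol n R) (hv : InI I v) (hw : InI I w)
    (o1 : u ⬝ᵥ v = 0) (o2 : u ⬝ᵥ w = 0) : Fd I u v * Fd I u w = Fd I u (v + w) := by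
  have o3 : u ⬝ᵥ (v + w) = 0 := by rw [dotProduct_add, o1, o2, add_zero]
  have := PresentedGroup.one_of_mem (rels := {w | StarRels n R I w})
    (StarRels.addF u v w hu hv hw (hv.add hw) o1 o2 o3)
  rw [← Fd_eq hu hv o1, ← Fd_eq hu hw o2, ← Fd_eq hu (hv.add hw) o3]
  exact mul_inv_eq_one.1 this

lemma Sd_zero {v : Fin n → R} (hv : v ∈ Ecol n R) : Sd I 0 v = 1 := by
  have := Sd_add (I := I) InI.zero InI.zero hv (zero_dotProduct v) (zero_dotProduct v)
  rw [add_zero] at this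
  exact mul_eq_left.1 this

/-- `h` acts on the generators `F` by `g`. -/
def Act (h : StStar n R I) (g : GeneralLinearGroup (Fin n) R) : Prop :=
  g ∈ Elem n R ∧ ∀ u v : Fin n → R, u ∈ Ecol n R → InI I v → u ⬝ᵥ v = 0 →
    h * Fd I u v * h⁻¹ = Fd I (g.val *ᵥ u) (v ᵥ* g⁻¹.val)

lemma Act.one : Act (1 : StStar n R I) 1 := by
  refine ⟨one_mem _, fun u v _ _ _ => ?_⟩
  simp

lemma Act.mul {h h' : StStar n R I} {g g' : GeneralLinearGroup (Fin n) R} (H : Act h g)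
    (H' : Act h' g') : Act (h * h') (g * g') := by
  refine ⟨mul_mem H.1 H'.1, fun u v hu hv ho => ?_⟩
  have e : h * h' * Fd I u v * (h * h')⁻¹ = h * (h' * Fd I u v * h'⁻¹) * h⁻¹ := by group
  rw [e, H'.2 u v hu hv ho, H.2 _ _ (act_col H'.1 hu) (hv.vecMul _) (by rw [dot_act, ho]),
    _root_.mul_inv_rev, Units.val_mul, Units.val_mul, mulVec_mulVec, vecMul_vecMul]

lemma act_Fd {u v : Fin n → R} (hu : u ∈ Ecol n R) (hv : InI I v) (ho : u ⬝ᵥ v = 0) :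
    Act (Fd I u v) (tGL u v ho) := by
  refine ⟨tGL_mem hu ho, fun u' v' hu' hv' ho' => ?_⟩
  have e : v' ᵥ* (tGL u v ho)⁻¹.val = (1 - vecMulVec v u) *ᵥ v' := by
    rw [tGL_inv_val, ← mulVec_transpose, transpose_sub, transpose_one, transpose_vecMulVec]
  have e1 : (tGL u v ho).val *ᵥ u' = tMat u v *ᵥ u' := rfl
  have h1 := act_col (tGL_mem hu ho) hu'
  have h2 := hv'.vecMul (tGL u v ho)⁻¹.val
  have h3 := (dot_act (tGL u v ho) u' v').trans ho'
  rw [e] at h2 h3 ⊢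
  rw [e1] at h1 h3 ⊢
  have := PresentedGroup.one_of_mem (rels := {w | StarRels n R I w})
    (StarRels.conjF u v u' v' hu hv ho hu' hv' ho' h1 h2 h3)
  rw [← Fd_eq hu hv ho, ← Fd_eq hu' hv' ho', ← Fd_eq h1 h2 h3]
  exact mul_inv_eq_one.1 this

lemma coinc (hn : 4 ≤ n) {M : GeneralLinearGroup (Fin n) R} (hM : M ∈ Elem n R) {i j : Fin n}
    (hij : i ≠ j) {a : R} (ha : a ∈ I) :
    Fd I (colM M i) (a • starCol M j) = Sd I (a • colM M i) (starCol M j) := by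
  obtain ⟨P, hP, e1, e2⟩ := good_all (R := R) hn hij
  have f1 : colM M i = colM (M * P) 0 := by rw [colM_mul, e1, colM_eq]
  have f2 : starCol M j = starCol (M * P) 1 := by rw [starCol_mul, e2, starCol_eq]
  have c1 : colM M i ∈ Ecol n R := by rw [f1]; exact mem_Ecol.2 ⟨_, mul_mem hM hP, rfl⟩
  have c2 : starCol M j ∈ Ecol n R := by
    obtain ⟨Q, hQ, e3, -⟩ := good_all (R := R) hn hij.symm
    refine mem_Ecol.2 ⟨contra M * Q, mul_mem (contra_mem hM) hQ, ?_⟩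
    rw [colM_mul, e3, ← colM_eq, colM_contra]
  have c3 : colM M i ⬝ᵥ starCol M j = 0 := by rw [dot_col, if_neg hij]
  have c4 : colM M i ⬝ᵥ (a • starCol M j) = 0 := by rw [dotProduct_smul, c3, smul_zero]
  have c5 : (a • colM M i) ⬝ᵥ starCol M j = 0 := by rw [smul_dotProduct, c3, smul_zero]
  rw [f1] at c1 c4 c5 ⊢
  rw [f2] at c2 c4 c5 ⊢
  have := PresentedGroup.one_of_mem (rels := {w | StarRels n R I w})
    (StarRels.coinc (M * P) (mul_mem hM hP) a ha c1 (InI.smul ha _) c4 (InI.smul ha _) c2 c5)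
  rw [← Fd_eq c1 (InI.smul ha _) c4, ← Sd_eq (InI.smul ha _) c2 c5]
  exact mul_inv_eq_one.1 this

lemma colM_mem (hn : 4 ≤ n) {M : GeneralLinearGroup (Fin n) R} (hM : M ∈ Elem n R) {i : Fin n}
    (hi : i ≠ 0) : colM M i ∈ Ecol n R := by
  obtain ⟨P, hP, e1, -⟩ := good_all (R := R) hn hi
  exact mem_Ecol.2 ⟨M * P, mul_mem hM hP, by rw [colM_mul, e1, colM_eq]⟩

lemma act_Sd (hn : 4 ≤ n) {u v : Fin n → R} (hu : InI I u) (hv : v ∈ Ecol n R)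
    (ho : u ⬝ᵥ v = 0) : Act (Sd I u v) (tGL u v ho) := by
  obtain ⟨M, hM, rfl⟩ := mem_Ecol'.1 hv
  refine decomp I M (fun u => ∀ ho, Act (Sd I u (starCol M 0)) (tGL u (starCol M 0) ho))
    ?_ ?_ ?_ u hu ho ho
  · intro h
    rw [Sd_zero hv, tGL_zero]; exact Act.one
  · intro u w hu hw ou ow pu pw h
    rw [tGL_add u w _ ou ow, ← Sd_add hu hw hv ou ow]
    exact (pu ou).mul (pw ow)
  · intro i hi a ha h
    have h' : colM M i ⬝ᵥ (a • starCol M 0) = 0 := by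
      rw [dotProduct_smul, dot_col, if_neg hi, smul_zero]
    rw [← coinc hn hM hi ha, tGL_smul _ _ _ h h']
    exact act_Fd (colM_mem hn hM hi) (InI.smul ha _) h'

lemma Act.conj_Sd (hn : 4 ≤ n) {h : StStar n R I} {g : GeneralLinearGroup (Fin n) R}
    (H : Act h g) {u v : Fin n → R} (hu : InI I u) (hv : v ∈ Ecol n R) (ho : u ⬝ᵥ v = 0) :
    h * Sd I u v * h⁻¹ = Sd I (g.val *ᵥ u) (v ᵥ* g⁻¹.val) := by
  obtain ⟨M, hM, rfl⟩ := mem_Ecol'.1 hv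
  refine decomp I M (fun u => h * Sd I u (starCol M 0) * h⁻¹ =
    Sd I (g.val *ᵥ u) (starCol M 0 ᵥ* g⁻¹.val)) ?_ ?_ ?_ u hu ho
  · rw [Sd_zero hv, mulVec_zero, Sd_zero (act_star H.1 hv)]; simp
  · intro u w hu hw ou ow pu pw
    rw [mulVec_add, ← Sd_add hu hw hv ou ow, ← Sd_add (hu.mulVec _) (hw.mulVec _)
      (act_star H.1 hv) (by rw [dot_act, ou]) (by rw [dot_act, ow]), ← pu, ← pw]
    group
  · intro i hi a ha
    have h' : colM M i ⬝ᵥ (a • starCol M 0) = 0 := by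
      rw [dotProduct_smul, dot_col, if_neg hi, smul_zero]
    rw [← coinc hn hM hi ha, H.2 _ _ (colM_mem hn hM hi) (InI.smul ha _) h', mulVec_smul,
      smul_vecMul, ← colM_mul, ← starCol_mul, coinc hn (mul_mem H.1 hM) hi ha]

variable (I) in
/-- The images of the generators. -/
noncomputable def gen : StarGen n R I → (StStar n R I)ᵐᵒᵖ
  | .F u v _ _ _ => MulOpposite.op (Sd I v u)
  | .S u v _ _ _ => MulOpposite.op (Fd I v u)

lemma gen_rels (hn : 4 ≤ n) : ∀ r ∈ {w | StarRels n R I w}, FreeGroup.lift (gen I) r = 1 := by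
  intro r hr
  cases hr with
  | addF u v w hu hv hw hvw o1 o2 o3 =>
    rw [dotProduct_comm] at o1 o2
    simp only [map_mul, map_inv, FreeGroup.lift_apply_of, gen]
    rw [mul_inv_eq_one, ← MulOpposite.op_mul, Sd_add hw hv hu o2 o1, add_comm]
  | addS u w v hu hw huw hv o1 o2 o3 =>
    rw [dotProduct_comm] at o1 o2
    simp only [map_mul, map_inv, FreeGroup.lift_apply_of, gen]
    rw [mul_inv_eq_one, ← MulOpposite.op_mul, Fd_add hv hw hu o2 o1, add_comm]
  | conjF u v u' v' hu hv o1 hu' hv' o2 hu'' hv'' o3 =>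
    have o1' := o1
    have o2' := o2
    rw [dotProduct_comm] at o1' o2'
    have hv2 : InI I (-v) := fun i => I.neg_mem (hv i)
    have on : (-v) ⬝ᵥ u = 0 := by rw [neg_dotProduct, o1', neg_zero]
    have hinv : (Sd I v u)⁻¹ = Sd I (-v) u := by
      rw [inv_eq_iff_mul_eq_one, Sd_add hv hv2 hu o1' on, add_neg_cancel, Sd_zero hu]
    simp only [map_mul, map_inv, FreeGroup.lift_apply_of, gen]
    rw [mul_inv_eq_one, ← MulOpposite.op_inv, ← MulOpposite.op_mul, ← MulOpposite.op_mul]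
    congr 1
    have := (act_Sd hn hv2 hu on).conj_Sd hn hv' hu' o2'
    rw [← hinv, inv_inv, mul_assoc] at this
    rw [this]
    congr 1
    · rw [tGL_val, neg_vecMulVec, sub_eq_add_neg]
    · rw [tGL_inv_val, neg_vecMulVec, sub_neg_eq_add, ← mulVec_transpose, transpose_add,
        transpose_one, transpose_vecMulVec, tMat]
  | coinc M hM a ha h1 h2 h3 h4 h5 h6 =>
    simp only [map_mul, map_inv, FreeGroup.lift_apply_of, gen]
    rw [mul_inv_eq_one]
    congr 1
    have := coinc (I := I) hn (contra_mem hM) (zero_ne_one' hn).symm ha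
    rw [colM_contra, starCol_contra] at this
    exact this.symm

end St
end
end StAux

theorem stmt12 (n : ℕ) (hn : 4 ≤ n) [NeZero n] (R : Type) [CommRing R] (I : Ideal R) :
    ∃ τ : StStar n R I → StStar n R I,
      Function.Bijective τ ∧
      (∀ g h : StStar n R I, τ (g * h) = τ h * τ g) ∧
      (∀ g : StStar n R I, τ (τ g) = g) ∧
      (∀ (u v : Fin n → R) (hu : u ∈ Ecol n R) (hv : ∀ i, v i ∈ I)
        (ho : dotProduct u v = 0) (ho' : dotProduct v u = 0),
        τ (PresentedGroup.of (StarGen.F u v hu hv ho)) =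
          PresentedGroup.of (StarGen.S v u hv hu ho')) ∧
      (∀ (u v : Fin n → R) (hu : ∀ i, u i ∈ I) (hv : v ∈ Ecol n R)
        (ho : dotProduct u v = 0) (ho' : dotProduct v u = 0),
        τ (PresentedGroup.of (StarGen.S u v hu hv ho)) =
          PresentedGroup.of (StarGen.F v u hv hu ho')) := by
  classical
  let φ : StStar n R I →* (StStar n R I)ᵐᵒᵖ := PresentedGroup.toGroup (StAux.gen_rels (I := I) hn)
  have hmul : ∀ g h : StStar n R I, (φ (g * h)).unop = (φ h).unop * (φ g).unop := by
    intro g h; rw [map_mul, MulOpposite.unop_mul]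
  have hF : ∀ (u v : Fin n → R) (hu : u ∈ Ecol n R) (hv : ∀ i, v i ∈ I)
        (ho : dotProduct u v = 0) (ho' : dotProduct v u = 0),
        (φ (PresentedGroup.of (StarGen.F u v hu hv ho))).unop =
          PresentedGroup.of (StarGen.S v u hv hu ho') := by
    intro u v hu hv ho ho'
    rw [StAux.Sd_eq hv hu ho']
    exact congrArg MulOpposite.unop (PresentedGroup.toGroup.of (StAux.gen_rels (I := I) hn))
  have hS : ∀ (u v : Fin n → R) (hu : ∀ i, u i ∈ I) (hv : v ∈ Ecol n R)
        (ho : dotProduct u v = 0) (ho' : dotProduct v u = 0),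
        (φ (PresentedGroup.of (StarGen.S u v hu hv ho))).unop =
          PresentedGroup.of (StarGen.F v u hv hu ho') := by
    intro u v hu hv ho ho'
    rw [StAux.Fd_eq hv hu ho']
    exact congrArg MulOpposite.unop (PresentedGroup.toGroup.of (StAux.gen_rels (I := I) hn))
  have hinv : ∀ g : StStar n R I, (φ (φ g).unop).unop = g := by
    let ψ : StStar n R I →* StStar n R I :=
      MonoidHom.mk' (fun g => (φ (φ g).unop).unop) (fun a b => by rw [hmul, hmul])
    have : ψ = MonoidHom.id _ := by
      apply PresentedGroup.ext
      rintro (⟨u, v, hu, hv, ho⟩ | ⟨u, v, hu, hv, ho⟩)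
      · have ho' : dotProduct v u = 0 := by rw [dotProduct_comm]; exact ho
        change (φ (φ _).unop).unop = _
        rw [hF u v hu hv ho ho', hS v u hv hu ho' ho]; rfl
      · have ho' : dotProduct v u = 0 := by rw [dotProduct_comm]; exact ho
        change (φ (φ _).unop).unop = _
        rw [hS u v hu hv ho ho', hF v u hv hu ho' ho]; rfl
    intro g
    exact DFunLike.congr_fun this g
  exact ⟨fun g => (φ g).unop, Function.Involutive.bijective hinv, hmul, hinv, hF, hS⟩
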